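/- Let X be a real Banach space which is a universal BPB domain space (the pair (X,Z) has the Bishop–Phelps–Bollobás property for every real Banach space Z), and suppose X admits an equivalent uniformly convex norm. Then the set of strongly exposed points of the closed unit ball B_X is dense in the unit sphere S_X, where x ∈ S_X is a strongly exposed point of B_X if there exists a continuous linear functional f on X with ‖f‖ = 1 and f(x) = 1 such that for every ε > 0 there is δ > 0 with: every z ∈ B_X satisfying f(z) > 1 − δ has ‖z − x‖ < ε. -/

import Mathlib

open scoped ENNReal

/-- A pair `(X, Y)` of normed spaces has the Bishop–Phelps–Bollobás property with the
function `η : (0,1) → (0,∞)` (encoded as `η : ℝ → ℝ`, relevant only on `(0,1)`). -/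
def BPBpWith (X Y : Type*) [NormedAddCommGroup X] [NormedSpace ℝ X]
    [NormedAddCommGroup Y] [NormedSpace ℝ Y] (η : ℝ → ℝ) : Prop :=
  ∀ ε ∈ Set.Ioo (0 : ℝ) 1, ∀ (T₀ : X →L[ℝ] Y) (x₀ : X),
    ‖T₀‖ = 1 → ‖x₀‖ = 1 → 1 - η ε < ‖T₀ x₀‖ →
      ∃ (S : X →L[ℝ] Y) (x : X),
        ‖x‖ = 1 ∧ ‖S‖ = 1 ∧ ‖S x‖ = 1 ∧ ‖x - x₀‖ < ε ∧ ‖S - T₀‖ < ε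

/-- The pair `(X, Y)` has the Bishop–Phelps–Bollobás property. -/
def HasBPBp (X Y : Type*) [NormedAddCommGroup X] [NormedSpace ℝ X]
    [NormedAddCommGroup Y] [NormedSpace ℝ Y] : Prop :=
  ∃ η : ℝ → ℝ, (∀ ε ∈ Set.Ioo (0 : ℝ) 1, 0 < η ε) ∧ BPBpWith X Y η

/-- `x` is a strongly exposed point of the closed unit ball of `X`: `x` lies on the unit
sphere and there is a norm-one functional `f` with `f x = 1` such that points of the ball
where `f` is nearly `1` are close to `x`. -/
def StronglyExposedPointOfBall (X : Type*) [NormedAddCommGroup X] [NormedSpace ℝ X]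
    (x : X) : Prop :=
  ‖x‖ = 1 ∧ ∃ f : X →L[ℝ] ℝ, ‖f‖ = 1 ∧ f x = 1 ∧
    ∀ ε > (0 : ℝ), ∃ δ > (0 : ℝ), ∀ z ∈ Metric.closedBall (0 : X) 1,
      1 - δ < f z → ‖z - x‖ < ε

/-!
Fix a norm-one `x₀` and let `f` be a norm-one functional with `f x₀ = 1`. If `q` embeds `X` into a
locally uniformly rotund space and `‖q‖ ≤ 1`, then for `a ^ 2 + b ^ 2 = 1` the norm
`‖x‖ₐ ^ 2 = a ^ 2 * max ‖q x‖ |f x| ^ 2 + b ^ 2 * ‖q x‖ ^ 2` on `X` is locally uniformly rotund,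
lies between `‖q x‖` and `‖x‖`, and is at least `a` at `x₀`. Let `Yₐ` be `X` with this norm.

The Bishop–Phelps–Bollobás property for the pair of `X` and the `ℓ^∞`-sum of all the `Yₐ` yields
one function `η` valid for every pair `(X, Yₐ)`. Given a small `ε`, choose `a > 1 - η ε`: the
identity `X → Yₐ`, once normalized, nearly attains its norm at `x₀`, so an operator `S` close to
it attains its norm at a point `x` close to `x₀`. Since `‖x‖ₐ ≥ ‖q x‖`, the lower bound of the
identity does not depend on `a`, and therefore `S` is still bounded below for small `ε`. As `S x`
is strongly exposed in the unit ball of `Yₐ`, the point `x` is strongly exposed in that of `X`.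
-/

section LocalUniformRotundity

variable {E F : Type*} [NormedAddCommGroup E] [NormedAddCommGroup F]

/-- The quantity measuring local uniform rotundity; by the parallelogram law it is `‖u - v‖ ^ 2`
in an inner product space. -/
def parallelogramDefect (u v : E) : ℝ := 2 * ‖u‖ ^ 2 + 2 * ‖v‖ ^ 2 - ‖u + v‖ ^ 2

theorem sq_norm_sub_norm_le_parallelogramDefect (u v : E) :
    (‖u‖ - ‖v‖) ^ 2 ≤ parallelogramDefect u v := by
  have htriangle : ‖u + v‖ ^ 2 ≤ (‖u‖ + ‖v‖) ^ 2 := by gcongr; exact norm_add_le u v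
  unfold parallelogramDefect
  linarith

theorem sq_norm_add_norm_sub_norm_add_le_parallelogramDefect (u v : E) :
    (‖u‖ + ‖v‖ - ‖u + v‖) ^ 2 ≤ parallelogramDefect u v := by
  have hgap : 0 ≤ ‖u‖ + ‖v‖ - ‖u + v‖ := sub_nonneg.2 (norm_add_le u v)
  unfold parallelogramDefect
  nlinarith [mul_nonneg hgap (norm_nonneg (u + v)), sq_nonneg (‖u‖ - ‖v‖)]

theorem parallelogramDefect_snd_le (u v : WithLp 2 (E × F)) :
    parallelogramDefect u.snd v.snd ≤ parallelogramDefect u v := by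
  have hfst := (sq_nonneg _).trans (sq_norm_sub_norm_le_parallelogramDefect u.fst v.fst)
  simp only [parallelogramDefect, WithLp.prod_norm_sq_eq_of_L2, WithLp.add_fst,
    WithLp.add_snd] at hfst ⊢
  linarith

variable (E) in
/-- Local uniform rotundity of the norm: `‖v - u‖ → 0` whenever `u` is fixed and
`2 * ‖u‖ ^ 2 + 2 * ‖v‖ ^ 2 - ‖u + v‖ ^ 2 → 0`. This quadratic form of the notion needs no
normalization of the vectors and behaves well under `ℓ²`-sums. -/
def IsLocallyUniformlyRotund : Prop :=
  ∀ u : E, ∀ ε > 0, ∃ θ > 0, ∀ v : E, parallelogramDefect u v < θ → ‖v - u‖ < ε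

theorem IsLocallyUniformlyRotund.of_parallelogramDefect_le (hF : IsLocallyUniformlyRotund F)
    {φ : E → F} {c : ℝ} (hc : 0 < c) (hφ : ∀ u v, c * ‖u - v‖ ≤ ‖φ u - φ v‖)
    (hdefect : ∀ u v, parallelogramDefect (φ u) (φ v) ≤ parallelogramDefect u v) :
    IsLocallyUniformlyRotund E := by
  intro u ε hε
  obtain ⟨θ, hθ, hclose⟩ := hF (φ u) (c * ε) (by positivity)
  refine ⟨θ, hθ, fun v hv ↦ lt_of_mul_lt_mul_left ?_ hc.le⟩
  calc c * ‖v - u‖ ≤ ‖φ v - φ u‖ := hφ v u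
    _ < c * ε := hclose _ ((hdefect u v).trans_lt hv)

theorem exists_norm_le_and_norm_sub_le_abs [NormedSpace ℝ E] {r : ℝ} (hr : 0 ≤ r) (v : E) :
    ∃ w : E, ‖w‖ ≤ r ∧ ‖w - v‖ ≤ |r - ‖v‖| := by
  rcases le_or_gt ‖v‖ r with hv | hv
  · exact ⟨v, hv, by simp⟩
  have hv0 : 0 < ‖v‖ := hr.trans_lt hv
  refine ⟨(r / ‖v‖) • v, ?_, ?_⟩
  · rw [norm_smul, Real.norm_of_nonneg (by positivity), div_mul_cancel₀ _ hv0.ne']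
  · have hdiff : (r / ‖v‖) • v - v = ((r - ‖v‖) / ‖v‖) • v := by
      rw [sub_div, div_self hv0.ne', sub_smul, one_smul]
    rw [hdiff, norm_smul, norm_div, norm_norm, Real.norm_eq_abs, div_mul_cancel₀ _ hv0.ne']

variable (E) in
theorem isLocallyUniformlyRotund_of_uniformConvexSpace [NormedSpace ℝ E] [UniformConvexSpace E] :
    IsLocallyUniformlyRotund E := by
  intro u ε hε
  obtain ⟨δ, hδ, hconvex⟩ :=
    exists_forall_closed_ball_dist_add_le_two_mul_sub E (half_pos hε) ‖u‖
  set s := min (ε / 2) (δ / 3)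
  have hs : 0 < s := by positivity
  refine ⟨s ^ 2, by positivity, fun v hv ↦ ?_⟩
  have hnorm : |‖u‖ - ‖v‖| < s :=
    abs_lt_of_sq_lt_sq ((sq_norm_sub_norm_le_parallelogramDefect u v).trans_lt hv) hs.le
  have hadd : ‖u‖ + ‖v‖ - ‖u + v‖ < s :=
    lt_of_pow_lt_pow_left₀ 2 hs.le
      ((sq_norm_add_norm_sub_norm_add_le_parallelogramDefect u v).trans_lt hv)
  obtain ⟨w, hw, hwv⟩ := exists_norm_le_and_norm_sub_le_abs (norm_nonneg u) v
  have huw : ‖u - w‖ < ε / 2 := by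
    by_contra! hfar
    have hsum := hconvex le_rfl hw hfar
    have htriangle : ‖u + v‖ ≤ ‖u + w‖ + ‖w - v‖ := by
      rw [show u + v = (u + w) - (w - v) by abel]
      exact norm_sub_le _ _
    linarith [(abs_lt.1 hnorm).2, min_le_right (ε / 2) (δ / 3)]
  calc ‖v - u‖ = ‖(u - w) + (w - v)‖ := by rw [sub_add_sub_cancel, norm_sub_rev]
    _ ≤ ‖u - w‖ + ‖w - v‖ := norm_add_le _ _
    _ < ε := by linarith [min_le_left (ε / 2) (δ / 3)]

end LocalUniformRotundity

section BoundedBelow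

variable {E F : Type*} [NormedAddCommGroup E] [NormedSpace ℝ E]
  [NormedAddCommGroup F] [NormedSpace ℝ F]

theorem opNorm_eq_one_of_norm_apply_eq_one {S : E →L[ℝ] F} {x : E} (hS : ‖S‖ ≤ 1) (hx : ‖x‖ = 1)
    (hSx : ‖S x‖ = 1) : ‖S‖ = 1 :=
  hS.antisymm (hSx ▸ S.unit_le_opNorm x hx.le)

theorem sub_mul_norm_le_norm_apply {S T : E →L[ℝ] F} {k ε : ℝ} (hT : ∀ z, k * ‖z‖ ≤ ‖T z‖)
    (hST : ‖S - T‖ ≤ ε) (z : E) : (k - ε) * ‖z‖ ≤ ‖S z‖ := by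
  have hdiff : ‖T z - S z‖ ≤ ε * ‖z‖ := by
    rw [norm_sub_rev]
    exact (S - T).le_of_opNorm_le hST z
  linarith [hT z, norm_sub_norm_le (T z) (S z)]

theorem exists_opNorm_eq_one_and_norm_apply_le {T : E →L[ℝ] F} (hT0 : T ≠ 0) (hT1 : ‖T‖ ≤ 1) :
    ∃ T' : E →L[ℝ] F, ‖T'‖ = 1 ∧ ∀ x, ‖T x‖ ≤ ‖T' x‖ := by
  refine ⟨‖T‖⁻¹ • T, norm_smul_inv_norm (𝕜 := ℝ) hT0, fun x ↦ ?_⟩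
  rw [smul_apply, norm_smul, norm_inv, norm_norm]
  exact le_mul_of_one_le_left (norm_nonneg _) ((one_le_inv₀ (norm_pos_iff.2 hT0)).2 hT1)

theorem exists_opNorm_le_one_and_bounded_below {q : E →L[ℝ] F} {k : ℝ} (hk : 0 < k)
    (hq : ∀ x, k * ‖x‖ ≤ ‖q x‖) :
    ∃ q' : E →L[ℝ] F, ‖q'‖ ≤ 1 ∧ ∃ k' > 0, ∀ x, k' * ‖x‖ ≤ ‖q' x‖ := by
  set c := (‖q‖ + 1)⁻¹
  have hc : 0 < c := by positivity
  refine ⟨c • q, ?_, c * k, by positivity, fun x ↦ ?_⟩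
  · rw [norm_smul, Real.norm_of_nonneg hc.le, inv_mul_le_one₀ (by positivity)]
    exact (lt_add_one _).le
  · rw [smul_apply, norm_smul, Real.norm_of_nonneg hc.le, mul_assoc]
    exact mul_le_mul_of_nonneg_left (hq x) hc.le

theorem completeSpace_range_of_bounded_below [CompleteSpace E] {T : E →L[ℝ] F} {k : ℝ}
    (hk : 0 < k) (hT : ∀ x, k * ‖x‖ ≤ ‖T x‖) : CompleteSpace T.range := by
  have hanti : AntilipschitzWith ⟨k⁻¹, by positivity⟩ T :=
    T.antilipschitz_of_bound fun x ↦ (le_inv_mul_iff₀ hk).2 (hT x)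
  exact (hanti.isComplete_range T.uniformContinuous).completeSpace_coe

end BoundedBelow

section StronglyExposed

variable {E F : Type*} [NormedAddCommGroup E] [NormedSpace ℝ E]
  [NormedAddCommGroup F] [NormedSpace ℝ F]

theorem IsLocallyUniformlyRotund.stronglyExposedPointOfBall (hE : IsLocallyUniformlyRotund E)
    {x : E} (hx : ‖x‖ = 1) : StronglyExposedPointOfBall E x := by
  obtain ⟨f, hf, hfx⟩ := exists_dual_vector ℝ x (by simp [hx])
  replace hfx : f x = 1 := by simpa [hx] using hfx
  refine ⟨hx, f, hf, hfx, fun ε hε ↦ ?_⟩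
  obtain ⟨θ, hθ, hclose⟩ := hE x ε hε
  refine ⟨min 1 (θ / 4), by positivity, fun z hz hfz ↦ hclose z ?_⟩
  rw [mem_closedBall_zero_iff] at hz
  set δ := min 1 (θ / 4)
  have hδ : δ ≤ 1 := min_le_left _ _
  have hadd : 2 - δ < ‖x + z‖ := by
    have hle : f (x + z) ≤ ‖x + z‖ :=
      (le_abs_self _).trans (by simpa using f.le_of_opNorm_le hf.le (x + z))
    rw [map_add, hfx] at hle
    linarith
  have hsq : (2 - δ) ^ 2 < ‖x + z‖ ^ 2 := by gcongr; linarith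
  have hz_sq : ‖z‖ ^ 2 ≤ 1 := pow_le_one₀ (norm_nonneg z) hz
  rw [parallelogramDefect, hx]
  nlinarith [min_le_right 1 (θ / 4), sq_nonneg δ]

theorem StronglyExposedPointOfBall.of_apply {S : E →L[ℝ] F} {x : E}
    (hSx : StronglyExposedPointOfBall F (S x)) (hS : ‖S‖ ≤ 1) (hx : ‖x‖ = 1) {k : ℝ} (hk : 0 < k)
    (hbelow : ∀ z, k * ‖z‖ ≤ ‖S z‖) : StronglyExposedPointOfBall E x := by
  obtain ⟨-, g, hg, hgSx, hexposes⟩ := hSx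
  have hgS : ‖g.comp S‖ ≤ 1 :=
    (g.opNorm_comp_le S).trans (by rwa [hg, one_mul])
  refine ⟨hx, g.comp S, opNorm_eq_one_of_norm_apply_eq_one hgS hx (by simp [hgSx]), hgSx,
    fun ε hε ↦ ?_⟩
  obtain ⟨δ, hδ, hslice⟩ := hexposes (k * ε) (by positivity)
  refine ⟨δ, hδ, fun z hz hgz ↦ lt_of_mul_lt_mul_left ?_ hk.le⟩
  rw [mem_closedBall_zero_iff] at hz
  have hSz : ‖S z‖ ≤ 1 := (S.unit_le_opNorm z hz).trans hS
  calc k * ‖z - x‖ ≤ ‖S z - S x‖ := map_sub S z x ▸ hbelow (z - x)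
    _ < k * ε := hslice _ (mem_closedBall_zero_iff.2 hSz) hgz

end StronglyExposed

section Renorming

variable {E F G : Type*} [NormedAddCommGroup E] [NormedSpace ℝ E]
  [NormedAddCommGroup F] [NormedSpace ℝ F] [NormedAddCommGroup G] [NormedSpace ℝ G]

/-- The operator `x ↦ (a • (q x, f x), b • q x)`, which embeds `E` with the norm
`(a ^ 2 * max ‖q x‖ ‖f x‖ ^ 2 + b ^ 2 * ‖q x‖ ^ 2) ^ (1 / 2)`: the inner product carries the sup
norm, the outer one the `ℓ²` norm. The coordinate `q x` next to `f x` makes the norm dominate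
`‖q x‖` however small `b` is. -/
noncomputable def renorming (q : E →L[ℝ] F) (f : E →L[ℝ] G) (a b : ℝ) :
    E →L[ℝ] WithLp 2 ((F × G) × F) :=
  ((WithLp.prodContinuousLinearEquiv 2 ℝ (F × G) F).symm : _ →L[ℝ] _).comp
    ((a • q.prod f).prod (b • q))

variable {q : E →L[ℝ] F} {f : E →L[ℝ] G} {a b k : ℝ}

theorem snd_renorming (x : E) : (renorming q f a b x).snd = b • q x := rfl

theorem norm_renorming_sq (x : E) :
    ‖renorming q f a b x‖ ^ 2 = a ^ 2 * max ‖q x‖ ‖f x‖ ^ 2 + b ^ 2 * ‖q x‖ ^ 2 := by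
  have hfst : (renorming q f a b x).fst = a • (q x, f x) := rfl
  rw [WithLp.prod_norm_sq_eq_of_L2, hfst, snd_renorming, norm_smul, norm_smul, Prod.norm_def,
    mul_pow, mul_pow, Real.norm_eq_abs, Real.norm_eq_abs, sq_abs, sq_abs]

theorem mul_norm_le_norm_renorming (x : E) : a * ‖f x‖ ≤ ‖renorming q f a b x‖ := by
  refine le_of_sq_le_sq ?_ (norm_nonneg _)
  calc (a * ‖f x‖) ^ 2 ≤ a ^ 2 * max ‖q x‖ ‖f x‖ ^ 2 := by
        rw [mul_pow]
        gcongr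
        exact le_max_right _ _
    _ ≤ ‖renorming q f a b x‖ ^ 2 := by
        rw [norm_renorming_sq]
        exact le_add_of_nonneg_right (by positivity)

theorem norm_apply_le_norm_renorming (hab : a ^ 2 + b ^ 2 = 1) (x : E) :
    ‖q x‖ ≤ ‖renorming q f a b x‖ := by
  refine le_of_sq_le_sq ?_ (norm_nonneg _)
  calc ‖q x‖ ^ 2 = a ^ 2 * ‖q x‖ ^ 2 + b ^ 2 * ‖q x‖ ^ 2 := by rw [← add_mul, hab, one_mul]
    _ ≤ a ^ 2 * max ‖q x‖ ‖f x‖ ^ 2 + b ^ 2 * ‖q x‖ ^ 2 := by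
        gcongr
        exact le_max_left _ _
    _ = ‖renorming q f a b x‖ ^ 2 := (norm_renorming_sq x).symm

theorem norm_renorming_le (hab : a ^ 2 + b ^ 2 = 1) (hq : ‖q‖ ≤ 1) (hf : ‖f‖ ≤ 1) (x : E) :
    ‖renorming q f a b x‖ ≤ ‖x‖ := by
  have hqx : ‖q x‖ ≤ ‖x‖ := by simpa using q.le_of_opNorm_le hq x
  have hfx : ‖f x‖ ≤ ‖x‖ := by simpa using f.le_of_opNorm_le hf x
  refine le_of_sq_le_sq ?_ (norm_nonneg _)
  calc ‖renorming q f a b x‖ ^ 2 = a ^ 2 * max ‖q x‖ ‖f x‖ ^ 2 + b ^ 2 * ‖q x‖ ^ 2 :=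
        norm_renorming_sq x
    _ ≤ a ^ 2 * ‖x‖ ^ 2 + b ^ 2 * ‖x‖ ^ 2 := by
        gcongr
        exact max_le hqx hfx
    _ = ‖x‖ ^ 2 := by rw [← add_mul, hab, one_mul]

theorem IsLocallyUniformlyRotund.range_renorming (hF : IsLocallyUniformlyRotund F)
    (hab : a ^ 2 + b ^ 2 = 1) (hb : 0 < b) (hq : ‖q‖ ≤ 1) (hf : ‖f‖ ≤ 1) (hk : 0 < k)
    (hbelow : ∀ x, k * ‖x‖ ≤ ‖q x‖) : IsLocallyUniformlyRotund (renorming q f a b).range := by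
  have hsnd (x : E) : b * k * ‖renorming q f a b x‖ ≤ ‖(renorming q f a b x).snd‖ :=
    calc b * k * ‖renorming q f a b x‖ ≤ b * k * ‖x‖ := by
          gcongr
          exact norm_renorming_le hab hq hf x
      _ ≤ b * ‖q x‖ := by
          rw [mul_assoc]
          exact mul_le_mul_of_nonneg_left (hbelow x) hb.le
      _ = ‖(renorming q f a b x).snd‖ := by
          rw [snd_renorming, norm_smul, Real.norm_of_nonneg hb.le]
  refine hF.of_parallelogramDefect_le (φ := fun v ↦ v.1.snd) (mul_pos hb hk) ?_
    fun u v ↦ parallelogramDefect_snd_le u.1 v.1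
  rintro ⟨_, x, rfl⟩ ⟨_, y, rfl⟩
  have hsub := hsnd (x - y)
  rw [map_sub] at hsub
  exact hsub

end Renorming

theorem IsLocallyUniformlyRotund.exists_opNorm_eq_one_and_le_norm_apply.{v} {E : Type*} {F : Type v}
    [NormedAddCommGroup E] [NormedSpace ℝ E] [CompleteSpace E]
    [NormedAddCommGroup F] [NormedSpace ℝ F] (hF : IsLocallyUniformlyRotund F)
    {q : E →L[ℝ] F} (hq : ‖q‖ ≤ 1) {k : ℝ} (hk : 0 < k) (hbelow : ∀ x, k * ‖x‖ ≤ ‖q x‖)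
    {x₀ : E} (hx₀ : ‖x₀‖ = 1) {a : ℝ} (ha : a ∈ Set.Ioo (0 : ℝ) 1) :
    ∃ (Y : Type v) (_ : NormedAddCommGroup Y) (_ : NormedSpace ℝ Y) (_ : CompleteSpace Y)
      (T : E →L[ℝ] Y), IsLocallyUniformlyRotund Y ∧ ‖T‖ = 1 ∧ a ≤ ‖T x₀‖ ∧
        ∀ z, k * ‖z‖ ≤ ‖T z‖ := by
  obtain ⟨f, hf, hfx₀⟩ := exists_dual_vector'' ℝ x₀
  obtain ⟨b, hb, hab⟩ : ∃ b : ℝ, 0 < b ∧ a ^ 2 + b ^ 2 = 1 := by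
    have hpos : 0 < 1 - a ^ 2 := sub_pos.2 (pow_lt_one₀ ha.1.le ha.2 two_ne_zero)
    exact ⟨√(1 - a ^ 2), Real.sqrt_pos.2 hpos, by rw [Real.sq_sqrt hpos.le]; ring⟩
  set L := renorming q f a b
  have hL : ∀ x, k * ‖x‖ ≤ ‖L x‖ := fun x ↦
    (hbelow x).trans (norm_apply_le_norm_renorming hab x)
  have hLx₀ : a ≤ ‖L x₀‖ := by
    simpa [hfx₀, hx₀] using mul_norm_le_norm_renorming (q := q) (f := f) (a := a) (b := b) x₀
  let T : E →L[ℝ] L.range := L.rangeRestrict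
  have hT0 : T ≠ 0 := by
    intro hT
    have hTx₀ : 0 < ‖T x₀‖ := ha.1.trans_le hLx₀
    simp [hT] at hTx₀
  have hT1 : ‖T‖ ≤ 1 := T.opNorm_le_bound zero_le_one fun x ↦
    (norm_renorming_le hab hq hf x).trans_eq (one_mul _).symm
  obtain ⟨T', hT', hTT'⟩ := exists_opNorm_eq_one_and_norm_apply_le hT0 hT1
  exact ⟨L.range, inferInstance, inferInstance, completeSpace_range_of_bounded_below hk hL,
    T', hF.range_renorming hab hb hq hf hk hbelow, hT', hLx₀.trans (hTT' x₀),
    fun z ↦ (hL z).trans (hTT' z)⟩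

section LInftySum

variable {ι : Type*} {Y : ι → Type*} [∀ i, NormedAddCommGroup (Y i)]

theorem norm_apply_eq_norm_of_norm_sub_single_lt [DecidableEq ι] {s : lp Y ∞} {i : ι} {y : Y i}
    (hs : ‖s - lp.single ∞ i y‖ < ‖s‖) : ‖s i‖ = ‖s‖ := by
  refine (lp.norm_apply_le_norm ENNReal.top_ne_zero s i).antisymm ?_
  have hmax : ‖s‖ ≤ max ‖s i‖ ‖s - lp.single ∞ i y‖ := by
    refine lp.norm_le_of_forall_le (by positivity) fun j ↦ ?_
    rcases eq_or_ne j i with rfl | hj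
    · exact le_max_left _ _
    · have hcoord := lp.norm_apply_le_norm ENNReal.top_ne_zero (s - lp.single ∞ i y) j
      rw [lp.coeFn_sub, Pi.sub_apply, lp.single_apply_ne _ _ _ hj, sub_zero] at hcoord
      exact hcoord.trans (le_max_right _ _)
  exact (le_max_iff.1 hmax).resolve_right hs.not_ge

theorem BPBpWith.of_lp_top [∀ i, NormedSpace ℝ (Y i)] {X : Type*} [NormedAddCommGroup X]
    [NormedSpace ℝ X] {η : ℝ → ℝ} (h : BPBpWith X (lp Y ∞) η) (i : ι) : BPBpWith X (Y i) η := by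
  classical
  intro ε hε T x₀ hT hx₀ hTx₀
  let T₀ : X →L[ℝ] lp Y ∞ := (lp.singleContinuousLinearMap ℝ Y ∞ i).comp T
  have hT₀ : ∀ x, ‖T₀ x‖ = ‖T x‖ := fun x ↦ lp.norm_single (by simp) i (T x)
  obtain ⟨S, x, hx, hS, hSx, hxx₀, hST₀⟩ :=
    h ε hε T₀ x₀ (by rw [T₀.opNorm_ext T hT₀, hT]) hx₀ (by rwa [hT₀])
  let P : X →L[ℝ] Y i := (lp.evalCLM ℝ Y ∞ i).comp S
  have hP : ‖P‖ ≤ 1 := P.opNorm_le_bound zero_le_one fun z ↦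
    (lp.norm_apply_le_norm ENNReal.top_ne_zero (S z) i).trans (S.le_of_opNorm_le hS.le z)
  have hPx : ‖P x‖ = 1 := by
    rw [← hSx]
    refine norm_apply_eq_norm_of_norm_sub_single_lt (y := T x) ?_
    calc ‖S x - T₀ x‖ ≤ ‖S - T₀‖ := (S - T₀).unit_le_opNorm x hx.le
      _ < 1 := hST₀.trans hε.2
      _ = ‖S x‖ := hSx.symm
  have hPT : ‖P - T‖ ≤ ‖S - T₀‖ := by
    refine (P - T).opNorm_le_bound (norm_nonneg _) fun z ↦ ?_
    have hcoord : (P - T) z = (S - T₀) z i :=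
      congrArg (S z i - ·) (lp.single_apply_self ∞ i (T z)).symm
    rw [hcoord]
    exact (lp.norm_apply_le_norm ENNReal.top_ne_zero _ i).trans ((S - T₀).le_opNorm z)
  exact ⟨P, x, hx, opNorm_eq_one_of_norm_apply_eq_one hP hx hPx, hPx, hxx₀, hPT.trans_lt hST₀⟩

end LInftySum

theorem BPBpWith.exists_stronglyExposedPointOfBall {X Y : Type*} [NormedAddCommGroup X]
    [NormedSpace ℝ X] [NormedAddCommGroup Y] [NormedSpace ℝ Y] {η : ℝ → ℝ}
    (h : BPBpWith X Y η) (hY : IsLocallyUniformlyRotund Y) {ε k : ℝ} (hε : ε ∈ Set.Ioo (0 : ℝ) 1)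
    (hεk : ε < k) {T : X →L[ℝ] Y} (hT : ‖T‖ = 1) (hbelow : ∀ z, k * ‖z‖ ≤ ‖T z‖) {x₀ : X}
    (hx₀ : ‖x₀‖ = 1) (hTx₀ : 1 - η ε < ‖T x₀‖) :
    ∃ x, StronglyExposedPointOfBall X x ∧ ‖x - x₀‖ < ε := by
  obtain ⟨S, x, hx, hS, hSx, hxx₀, hST⟩ := h ε hε T x₀ hT hx₀ hTx₀
  exact ⟨x, (hY.stronglyExposedPointOfBall hSx).of_apply hS.le hx (sub_pos.2 hεk)
    (sub_mul_norm_le_norm_apply hbelow hST.le), hxx₀⟩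

theorem stronglyExposedPoints_dense_of_universal_BPB_domain_general.{v} {X : Type*} {X' : Type v}
    [NormedAddCommGroup X] [NormedSpace ℝ X] [CompleteSpace X]
    (huniv : ∀ (Z : Type v) [NormedAddCommGroup Z] [NormedSpace ℝ Z] [CompleteSpace Z],
      HasBPBp X Z)
    [NormedAddCommGroup X'] [NormedSpace ℝ X'] (hX' : IsLocallyUniformlyRotund X')
    {q : X →L[ℝ] X'} {k : ℝ} (hk : 0 < k) (hq : ∀ x, k * ‖x‖ ≤ ‖q x‖) :
    Metric.sphere (0 : X) 1 ⊆ closure {x : X | StronglyExposedPointOfBall X x} := by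
  intro x₀ hx₀
  rw [mem_sphere_zero_iff_norm] at hx₀
  rw [Metric.mem_closure_iff]
  intro r hr
  obtain ⟨q', hq'_norm, k', hk', hq'⟩ := exists_opNorm_le_one_and_bounded_below hk hq
  choose Y _ _ _ T hY hT hTx₀ hbelow using fun a : Set.Ioo (0 : ℝ) 1 ↦
    hX'.exists_opNorm_eq_one_and_le_norm_apply hq'_norm hk' hq' hx₀ a.2
  obtain ⟨η, hη, hBPB⟩ := huniv (lp Y ∞)
  obtain ⟨ε, hε, hε_lt⟩ := exists_between (show 0 < min 1 (min r k') by positivity)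
  obtain ⟨hε1, hεr, hεk⟩ : ε < 1 ∧ ε < r ∧ ε < k' := by simpa using hε_lt
  obtain ⟨a, ha_gt, ha1⟩ := exists_between
    (show max 0 (1 - η ε) < 1 from max_lt one_pos (sub_lt_self _ (hη ε ⟨hε, hε1⟩)))
  obtain ⟨ha0, haη⟩ := max_lt_iff.1 ha_gt
  let i : Set.Ioo (0 : ℝ) 1 := ⟨a, ha0, ha1⟩
  obtain ⟨x, hx, hxx₀⟩ := (hBPB.of_lp_top i).exists_stronglyExposedPointOfBall (hY i) ⟨hε, hε1⟩
    hεk (hT i) (hbelow i) hx₀ (haη.trans_le (hTx₀ i))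
  exact ⟨x, hx, by rw [dist_comm, dist_eq_norm]; exact hxx₀.trans hεr⟩

/-- If `X` is a universal BPB domain space and admits an equivalent uniformly convex norm
(i.e. there is a uniformly convex Banach space `X'` and a linear isomorphism `e : X ≃ₗ[ℝ] X'`
with `c‖x‖ ≤ ‖e x‖ ≤ C‖x‖`), then the strongly exposed points of the closed unit ball of `X`
are dense in the unit sphere of `X`. -/
theorem stronglyExposedPoints_dense_of_universal_BPB_domain.{u} (X : Type u)
    [NormedAddCommGroup X] [NormedSpace ℝ X] [CompleteSpace X]
    (huniv : ∀ (Z : Type u) [NormedAddCommGroup Z] [NormedSpace ℝ Z] [CompleteSpace Z],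
      HasBPBp X Z)
    (hren : ∃ (X' : Type u) (_ : NormedAddCommGroup X') (_ : NormedSpace ℝ X')
      (_ : CompleteSpace X') (_ : UniformConvexSpace X') (e : X ≃ₗ[ℝ] X') (c C : ℝ),
        0 < c ∧ 0 < C ∧ ∀ x : X, c * ‖x‖ ≤ ‖e x‖ ∧ ‖e x‖ ≤ C * ‖x‖) :
    Metric.sphere (0 : X) 1 ⊆ closure {x : X | StronglyExposedPointOfBall X x} := by
  obtain ⟨X', _, _, _, _, e, c, C, hc, -, he⟩ := hren
  exact stronglyExposedPoints_dense_of_universal_BPB_domain_general huniv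
    (isLocallyUniformlyRotund_of_uniformConvexSpace X')
    (q := e.toLinearMap.mkContinuous C fun x ↦ (he x).2) hc fun x ↦ (he x).1
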